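/- Let S ⊆ ℂ and U ⊆ ℂ be domains (open connected sets), and let F : S × U → ℂ be holomorphic jointly in (λ, z) such that for every λ ∈ S the map z ↦ F(λ, z) is nonconstant on U. Let γ : S → ℂ be holomorphic, let λ₀ ∈ S, let N ≥ 1, and let z₁, …, z_N be N distinct points of U with F(λ₀, z_i) = γ(λ₀) for all 1 ≤ i ≤ N. Then there exist: an open neighborhood V ⊆ S of λ₀; a holomorphic map π : 𝔻 → V with π(0) = λ₀ whose image is all of V and whose restriction π : 𝔻 ∖ {0} → V ∖ {λ₀} is a covering map; and holomorphic maps x_i : 𝔻 → U (1 ≤ i ≤ N) with x_i(0) = z_i, such that F(π(t), x_i(t)) = γ(π(t)) for every t ∈ 𝔻 and every 1 ≤ i ≤ N. In other words, after pulling back by a finite branched cover of a neighborhood of λ₀ in parameter space, the N preimages z_i of the moving point γ(λ) under F(λ, ·) can be followed holomorphically. -/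

import Mathlib

open Metric

/-!
Newton–Puiseux: near `(λ₀, z i)` the equation `F (λ, z) = γ λ` has a solution that is a convergent
power series in a root `t` of `λ - λ₀`. It is found by induction on the order `n + 1` of the zero
of `G (0, z)`, where `G (w, z) = F (λ₀ + w, z i + z) - γ (λ₀ + w)`. A Tschirnhaus shift `z + a w`
removes the Taylor coefficient of `z ^ n`. If all lower coefficients vanish, then `z = 0` is a
solution. Otherwise let `p / q` be the least slope of the Newton polygon and divide
`G (s ^ q, s ^ p * (w₀ + v))` by `s ^ (p * (n + 1))`. At `s = 0` the quotient is a polynomial in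
`w₀ + v` of degree `n + 1`, without a term of degree `n` and not a monomial, so it has a root of
multiplicity between `1` and `n`; with this root as `w₀` the order drops. A common multiple of the
ramification indices serves all `z i` at once.

Joint analyticity of `G` and of its divided differences comes from Cauchy's formula, which
separates the variables: `f (w, z) = L w (K z)`, with `K z` the Cauchy kernel on a circle and `L w`
a continuous linear functional on the continuous functions on that circle.
-/

namespace Puiseux

open Filter Topology

lemma analyticAt_clm_apply_fst_snd {𝕜 E F G H : Type*} [NontriviallyNormedField 𝕜]
    [NormedAddCommGroup E] [NormedSpace 𝕜 E] [NormedAddCommGroup F] [NormedSpace 𝕜 F]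
    [NormedAddCommGroup G] [NormedSpace 𝕜 G] [NormedAddCommGroup H] [NormedSpace 𝕜 H]
    {L : E → G →L[𝕜] H} {K : F → G} {p : E × F} (hL : AnalyticAt 𝕜 L p.1)
    (hK : AnalyticAt 𝕜 K p.2) : AnalyticAt 𝕜 (fun p => L p.1 (K p.2)) p :=
  (ContinuousLinearMap.id 𝕜 (G →L[𝕜] H)).analyticAt_bilinear (L p.1, K p.2) |>.fun_comp
    (f := fun p : E × F => (L p.1, K p.2))
    ((hL.fun_comp analyticAt_fst).prod (hK.fun_comp analyticAt_snd))

section CauchyIntegral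

open scoped Real NNReal

lemma circleIntegral_comp_comm {E F : Type*} [NormedAddCommGroup E] [NormedSpace ℂ E]
    [CompleteSpace E] [NormedAddCommGroup F] [NormedSpace ℂ F] [CompleteSpace F] (L : E →L[ℂ] F)
    {f : ℂ → E} {c : ℂ} {r : ℝ} (hf : CircleIntegrable f c r) :
    (∮ ζ in C(c, r), L (f ζ)) = L (∮ ζ in C(c, r), f ζ) := by
  simp only [circleIntegral, ← L.map_smul]
  exact L.intervalIntegral_comp_comm hf.out

/-- The circle integral over `sphere c r`, as a continuous linear functional on the continuous
functions on that circle. -/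
noncomputable def circleIntegralCLM (c : ℂ) (r : ℝ≥0) : C(sphere c r, ℂ) →L[ℂ] ℂ :=
  let param : C(ℝ, sphere c r) :=
    ⟨fun θ => ⟨circleMap c r θ, circleMap_mem_sphere c r.coe_nonneg θ⟩, by fun_prop⟩
  LinearMap.mkContinuous
    { toFun := fun φ => ∫ θ in 0..2 * π, deriv (circleMap c r) θ • φ (param θ)
      map_add' := fun φ ψ => by
        simp only [ContinuousMap.add_apply, smul_add]
        refine intervalIntegral.integral_add ?_ ?_ <;>
        · simp only [deriv_circleMap]
          exact Continuous.intervalIntegrable (by fun_prop) _ _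
      map_smul' := fun a φ => by
        simp only [ContinuousMap.smul_apply, smul_comm _ a, intervalIntegral.integral_smul,
          RingHom.id_apply] }
    (r * |2 * π - 0|) fun φ => by
      have hbound : ∀ θ, ‖deriv (circleMap c r) θ • φ (param θ)‖ ≤ r * ‖φ‖ := fun θ => by
        rw [norm_smul]
        gcongr
        · simp [deriv_circleMap]
        · exact φ.norm_coe_le_norm _
      calc _ ≤ r * ‖φ‖ * |2 * π - 0| :=
            intervalIntegral.norm_integral_le_of_norm_le_const fun θ _ => hbound θ
        _ = _ := by ring

lemma circleIntegralCLM_apply {c : ℂ} {r : ℝ≥0} {φ : C(sphere c r, ℂ)} {f : ℂ → ℂ}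
    (h : ∀ ζ : sphere c r, φ ζ = f ζ) : circleIntegralCLM c r φ = ∮ ζ in C(c, r), f ζ := by
  simp only [circleIntegralCLM, circleIntegral, LinearMap.mkContinuous_apply, LinearMap.coe_mk,
    AddHom.coe_mk, ContinuousMap.coe_mk, h]

/-- The Cauchy kernel `ζ ↦ (ζ - z)⁻¹` on `sphere c r`, as an inverse in the Banach algebra of
continuous functions; it is the junk value `0` when `z` lies on the circle. -/
noncomputable def cauchyKernel (c : ℂ) (r : ℝ) (z : ℂ) : C(sphere c r, ℂ) :=
  Ring.inverse (⟨(↑), continuous_subtype_val⟩ - algebraMap ℂ C(sphere c r, ℂ) z)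

variable {c z : ℂ} {r : ℝ}

lemma isUnit_coe_sub_algebraMap (hz : z ∉ sphere c r) :
    IsUnit (⟨(↑), continuous_subtype_val⟩ - algebraMap ℂ C(sphere c r, ℂ) z) :=
  (ContinuousMap.isUnit_iff_forall_ne_zero _).2 fun ζ h =>
    hz ((sub_eq_zero.1 h : (ζ : ℂ) = z) ▸ ζ.2)

lemma cauchyKernel_apply (hz : z ∉ sphere c r) (ζ : sphere c r) :
    cauchyKernel c r z ζ = (ζ - z)⁻¹ :=
  eq_inv_of_mul_eq_one_right
    (DFunLike.congr_fun (Ring.mul_inverse_cancel _ (isUnit_coe_sub_algebraMap hz)) ζ)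

lemma analyticAt_cauchyKernel (hz : z ∉ sphere c r) : AnalyticAt ℂ (cauchyKernel c r) z := by
  have hinv := analyticAt_inverse (𝕜 := ℂ) (isUnit_coe_sub_algebraMap hz).unit
  rw [IsUnit.unit_spec] at hinv
  exact hinv.fun_comp (f := fun z => _ - algebraMap ℂ C(sphere c r, ℂ) z)
    (analyticAt_const.sub
      ((Algebra.linearMap ℂ C(sphere c r, ℂ)).toContinuousLinearMap.analyticAt z))

/-- The restriction of `f (w, ·)` to `sphere c r`, as a continuous function; it is the junk value
`0` when that restriction is not continuous. -/
noncomputable def circleSlice (f : ℂ × ℂ → ℂ) (c : ℂ) (r : ℝ) (w : ℂ) : C(sphere c r, ℂ) :=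
  ContinuousMap.mkD ((sphere c r).domRestrict fun ζ => f (w, ζ)) 0

variable {f : ℂ × ℂ → ℂ} {a b w : ℂ}

lemma circleSlice_apply (hf : ContinuousOn f (closedBall a r ×ˢ closedBall b r))
    (hw : w ∈ closedBall a r) (ζ : sphere b r) : circleSlice f b r w ζ = f (w, ζ) :=
  ContinuousMap.mkD_apply_of_continuousOn (f := fun ζ => f (w, ζ)) <|
    hf.comp (by fun_prop) fun _ hζ => ⟨hw, sphere_subset_closedBall hζ⟩

lemma continuousOn_circleSlice (hf : ContinuousOn f (closedBall a r ×ˢ closedBall b r)) :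
    ContinuousOn (circleSlice f b r) (closedBall a r) :=
  ContinuousMap.continuousOn_mkD_restrict_of_uncurry (fun w ζ => f (w, ζ)) 0 <|
    hf.mono (Set.prod_mono_right sphere_subset_closedBall)

lemma circleSlice_eq_circleIntegral
    (hf : DifferentiableOn ℂ f (closedBall a r ×ˢ closedBall b r)) (hw : w ∈ ball a r) :
    (2 * π * Complex.I : ℂ)⁻¹ • (∮ ω in C(a, r), (ω - w)⁻¹ • circleSlice f b r ω) =
      circleSlice f b r w := by
  ext ζ
  have hcont : ContinuousOn (fun ω => (ω - w)⁻¹ • circleSlice f b r ω) (sphere a r) := by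
    refine .smul (.inv₀ (continuousOn_id.sub continuousOn_const) fun ω hω h => ?_)
      ((continuousOn_circleSlice hf.continuousOn).mono sphere_subset_closedBall)
    exact (sphere_disjoint_ball.ne_of_mem hω hw) (sub_eq_zero.1 h)
  have hr : 0 ≤ r := (nonempty_ball.1 ⟨w, hw⟩).le
  have hdiff : DifferentiableOn ℂ (fun ω => f (ω, ζ)) (closedBall a r) :=
    hf.comp (by fun_prop) fun ω hω => ⟨hω, sphere_subset_closedBall ζ.2⟩
  calc _ = (2 * π * Complex.I : ℂ)⁻¹ • ∮ ω in C(a, r), (ω - w)⁻¹ • f (ω, ζ) := by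
        rw [ContinuousMap.smul_apply]
        congr 1
        refine (circleIntegral_comp_comm (ContinuousMap.evalCLM ℂ ζ)
          (hcont.circleIntegrable hr)).symm.trans (circleIntegral.integral_congr hr fun ω hω => ?_)
        exact congrArg ((ω - w)⁻¹ • ·)
          (circleSlice_apply hf.continuousOn (sphere_subset_closedBall hω) ζ)
    _ = f (w, ζ) := (hdiff.mono closure_ball_subset_closedBall).diffContOnCl
        |>.two_pi_i_inv_smul_circleIntegral_sub_inv_smul hw
    _ = _ := (circleSlice_apply hf.continuousOn (ball_subset_closedBall hw) ζ).symm

lemma analyticAt_circleSlice (hr : 0 < r)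
    (hf : DifferentiableOn ℂ f (closedBall a r ×ˢ closedBall b r)) :
    AnalyticAt ℂ (circleSlice f b r) a := by
  lift r to ℝ≥0 using hr.le
  have hint : CircleIntegrable (circleSlice f b r) a r :=
    ((continuousOn_circleSlice hf.continuousOn).mono sphere_subset_closedBall).circleIntegrable
      r.coe_nonneg
  refine (hasFPowerSeriesOn_cauchy_integral hint (mod_cast hr)).analyticAt.congr ?_
  filter_upwards [ball_mem_nhds a hr] with w hw
  exact circleSlice_eq_circleIntegral hf hw

lemma exists_eq_apply_cauchyKernel (hf : ∀ᶠ p in 𝓝 (a, b), DifferentiableAt ℂ f p) :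
    ∃ r > 0, ∃ L : ℂ → C(sphere b r, ℂ) →L[ℂ] ℂ, AnalyticAt ℂ L a ∧
      ∀ᶠ p in 𝓝 (a, b), f p = L p.1 (cauchyKernel b r p.2) := by
  obtain ⟨r, hr, hball⟩ := Metric.nhds_basis_closedBall.eventually_iff.1 hf
  have hdiff : DifferentiableOn ℂ f (closedBall a r ×ˢ closedBall b r) := fun p hp =>
    (hball (closedBall_prod_same a b r ▸ hp)).differentiableWithinAt
  lift r to ℝ≥0 using hr.le
  let I := (2 * π * Complex.I : ℂ)⁻¹ • circleIntegralCLM b r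
  let L (w : ℂ) : C(sphere b r, ℂ) →L[ℂ] ℂ :=
    I.comp (ContinuousLinearMap.mul ℂ C(sphere b r, ℂ) (circleSlice f b r w))
  have hL : AnalyticAt ℂ L a :=
    ((ContinuousLinearMap.compL ℂ _ _ _ I).comp (ContinuousLinearMap.mul ℂ _)).analyticAt _
      |>.fun_comp (analyticAt_circleSlice hr hdiff)
  refine ⟨r, hr, L, hL, ?_⟩
  filter_upwards [prod_mem_nhds (ball_mem_nhds a hr) (ball_mem_nhds b hr)] with ⟨w, z⟩ ⟨hw, hz⟩
  have hw' := ball_subset_closedBall hw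
  have hfw : DifferentiableOn ℂ (fun ζ => f (w, ζ)) (closedBall b r) :=
    hdiff.comp (by fun_prop) fun ζ hζ => ⟨hw', hζ⟩
  calc f (w, z) = (2 * π * Complex.I : ℂ)⁻¹ • ∮ ζ in C(b, r), (ζ - z)⁻¹ • f (w, ζ) :=
        ((hfw.mono closure_ball_subset_closedBall).diffContOnCl
          |>.two_pi_i_inv_smul_circleIntegral_sub_inv_smul hz).symm
    _ = L w (cauchyKernel b r z) := by
        refine congrArg (_ • ·) (circleIntegralCLM_apply fun ζ => ?_).symm
        change circleSlice f b r w ζ * cauchyKernel b r z ζ = _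
        rw [circleSlice_apply hdiff.continuousOn hw',
          cauchyKernel_apply (sphere_disjoint_ball.notMem_of_mem_right hz), smul_eq_mul, mul_comm]

/-- Osgood's lemma. -/
theorem analyticAt_of_eventually_differentiableAt
    (hf : ∀ᶠ p in 𝓝 (a, b), DifferentiableAt ℂ f p) : AnalyticAt ℂ f (a, b) := by
  obtain ⟨r, hr, L, hL, hfL⟩ := exists_eq_apply_cauchyKernel hf
  have hK : AnalyticAt ℂ (cauchyKernel b r) b := analyticAt_cauchyKernel (by simp [hr.ne])
  exact (analyticAt_clm_apply_fst_snd hL hK).congr (EventuallyEq.symm hfL)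

end CauchyIntegral

section SliceDslope

variable {𝕜 : Type*} [NontriviallyNormedField 𝕜]

lemma dslope_congr {E : Type*} [NormedAddCommGroup E] [NormedSpace 𝕜 E] {f g : 𝕜 → E} {b z : 𝕜}
    (h : f =ᶠ[𝓝 b] g) (hz : f z = g z) : dslope f b z = dslope g b z := by
  rcases eq_or_ne z b with rfl | hne
  · rw [dslope_same, dslope_same, h.deriv_eq]
  · rw [dslope_of_ne f hne, dslope_of_ne g hne, slope, slope, hz, h.eq_of_nhds]

/-- The divided difference `(f (w, z) - f (w, b)) / (z - b)` in the second variable, extended by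
the partial derivative to `z = b`. -/
noncomputable def sliceDslope (b : 𝕜) (f : 𝕜 × 𝕜 → 𝕜) (p : 𝕜 × 𝕜) : 𝕜 :=
  dslope (fun z => f (p.1, z)) b p.2

variable {f g : 𝕜 × 𝕜 → 𝕜} {a b : 𝕜}

lemma sliceDslope_congr (h : f =ᶠ[𝓝 (a, b)] g) :
    sliceDslope b f =ᶠ[𝓝 (a, b)] sliceDslope b g := by
  have hproj : Tendsto (fun p : 𝕜 × 𝕜 => (p.1, b)) (𝓝 (a, b)) (𝓝 (a, b)) := by
    have : Continuous fun p : 𝕜 × 𝕜 => (p.1, b) := by fun_prop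
    simpa using this.tendsto (a, b)
  filter_upwards [h, hproj.eventually h.eventually_nhds] with p hp hslice
  exact dslope_congr ((Continuous.prodMk_right p.1).tendsto b |>.eventually hslice) hp

lemma eq_sum_iterate_sliceDslope_add (b : 𝕜) (f : 𝕜 × 𝕜 → 𝕜) (n : ℕ) (p : 𝕜 × 𝕜) :
    f p = ∑ j ∈ Finset.range n, (p.2 - b) ^ j * (sliceDslope b)^[j] f (p.1, b) +
      (p.2 - b) ^ n * (sliceDslope b)^[n] f p := by
  induction n with
  | zero => simp
  | succ n ih =>
    have hstep : (sliceDslope b)^[n] f p =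
        (sliceDslope b)^[n] f (p.1, b) + (p.2 - b) * (sliceDslope b)^[n + 1] f p := by
      rw [Function.iterate_succ_apply', sliceDslope, ← smul_eq_mul, sub_smul_dslope]
      ring
    rw [Finset.sum_range_succ, add_assoc, pow_succ, mul_assoc, ← mul_add, ← hstep]
    exact ih

lemma iterate_sliceDslope_apply (b : 𝕜) (f : 𝕜 × 𝕜 → 𝕜) (n : ℕ) (p : 𝕜 × 𝕜) :
    (sliceDslope b)^[n] f p = (Function.swap dslope b)^[n] (fun z => f (p.1, z)) p.2 := by
  induction n generalizing f with
  | zero => rfl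
  | succ _ ih => exact ih (sliceDslope b f)

lemma iterate_dslope_self_eq_iteratedDeriv [CompleteSpace 𝕜] [CharZero 𝕜] {f : 𝕜 → 𝕜}
    (hf : AnalyticAt 𝕜 f b) (n : ℕ) :
    (Function.swap dslope b)^[n] f b = iteratedDeriv n f b / n.factorial := by
  rw [← (HasFPowerSeriesAt.has_fpower_series_iterate_dslope_fslope n
    hf.hasFPowerSeriesAt).coeff_zero 1, FormalMultilinearSeries.apply_eq_prod_smul_coeff]
  simp [FormalMultilinearSeries.coeff_iterate_fslope]

lemma iterate_sliceDslope_eq_iteratedDeriv [CompleteSpace 𝕜] [CharZero 𝕜] {w : 𝕜}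
    (hf : AnalyticAt 𝕜 (fun z => f (w, z)) b) (n : ℕ) :
    (sliceDslope b)^[n] f (w, b) = iteratedDeriv n (fun z => f (w, z)) b / n.factorial := by
  rw [iterate_sliceDslope_apply, iterate_dslope_self_eq_iteratedDeriv hf]

lemma analyticAt_sliceDslope {f : ℂ × ℂ → ℂ} {a b : ℂ} (hf : AnalyticAt ℂ f (a, b)) :
    AnalyticAt ℂ (sliceDslope b f) (a, b) := by
  obtain ⟨r, hr, L, hL, hfL⟩ := exists_eq_apply_cauchyKernel
    (hf.eventually_analyticAt.mono fun p hp => hp.differentiableAt)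
  obtain ⟨p, hp⟩ := analyticAt_cauchyKernel (c := b) (r := r) (z := b) (by simp [hr.ne])
  refine AnalyticAt.congr ?_ (sliceDslope_congr hfL).symm
  have hdslope : sliceDslope b (fun p => L p.1 (cauchyKernel b r p.2)) =
      fun p => L p.1 (dslope (cauchyKernel b r) b p.2) := by
    ext p
    exact (L p.1).dslope_comp (cauchyKernel b r) b p.2 fun _ => hp.differentiableAt
  rw [hdslope]
  exact analyticAt_clm_apply_fst_snd hL hp.has_fpower_series_dslope_fslope.analyticAt

lemma analyticAt_iterate_sliceDslope {f : ℂ × ℂ → ℂ} {a b : ℂ} (hf : AnalyticAt ℂ f (a, b))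
    (n : ℕ) : AnalyticAt ℂ ((sliceDslope b)^[n] f) (a, b) := by
  induction n with
  | zero => exact hf
  | succ n ih =>
    rw [Function.iterate_succ_apply']
    exact analyticAt_sliceDslope ih

end SliceDslope

section ImplicitFunction

variable {𝕜 : Type*} [RCLike 𝕜] {f : 𝕜 × 𝕜 → 𝕜} {p : 𝕜 × 𝕜}

lemma hasDerivAt_slice (hf : DifferentiableAt 𝕜 f p) :
    HasDerivAt (fun z => f (p.1, z)) (fderiv 𝕜 f p (0, 1)) p.2 :=
  hf.hasFDerivAt.comp_hasDerivAt p.2 ((hasDerivAt_const p.2 p.1).prodMk (hasDerivAt_id p.2))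

lemma analyticAt_deriv_slice (hf : AnalyticAt 𝕜 f p) :
    AnalyticAt 𝕜 (fun p : 𝕜 × 𝕜 => deriv (fun z => f (p.1, z)) p.2) p := by
  have hfderiv : AnalyticAt 𝕜 (fun p => fderiv 𝕜 f p (0, 1)) p :=
    (ContinuousLinearMap.apply 𝕜 𝕜 ((0, 1) : 𝕜 × 𝕜)).analyticAt _ |>.fun_comp hf.fderiv
  refine hfderiv.congr ?_
  filter_upwards [hf.eventually_analyticAt] with q hq
  exact (hasDerivAt_slice hq.differentiableAt).deriv.symm

lemma analyticAt_iteratedDeriv_slice (hf : AnalyticAt 𝕜 f p) (n : ℕ) :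
    AnalyticAt 𝕜 (fun p : 𝕜 × 𝕜 => iteratedDeriv n (fun z => f (p.1, z)) p.2) p := by
  induction n with
  | zero => simpa only [iteratedDeriv_zero] using hf
  | succ n ih => simpa only [iteratedDeriv_succ] using analyticAt_deriv_slice ih

theorem exists_analyticAt_implicit (hf : AnalyticAt 𝕜 f p)
    (hderiv : deriv (fun z => f (p.1, z)) p.2 ≠ 0) :
    ∃ a : 𝕜 → 𝕜, AnalyticAt 𝕜 a p.1 ∧ a p.1 = p.2 ∧ ∀ᶠ w in 𝓝 p.1, f (w, a w) = f p := by
  rw [(hasDerivAt_slice hf.differentiableAt).deriv] at hderiv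
  have hinv : (fderiv 𝕜 f p ∘L .inr 𝕜 𝕜 𝕜).IsInvertible :=
    ⟨ContinuousLinearEquiv.unitsEquivAut 𝕜 (Units.mk0 _ hderiv), by ext; simp⟩
  have hsmooth : ContDiffAt 𝕜 ⊤ f p := hf.contDiffAt
  exact ⟨hsmooth.implicitFunction (by simp) hinv,
    (hsmooth.contDiffAt_implicitFunction (by simp) hinv).analyticAt,
    hsmooth.implicitFunction_apply_self (by simp) hinv,
    hsmooth.eventually_apply_implicitFunction (by simp) hinv⟩

end ImplicitFunction

section AnalyticOrder

variable {𝕜 : Type*} [NontriviallyNormedField 𝕜]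

lemma analyticOrderAt_zero_pow (n : ℕ) : analyticOrderAt (fun s : 𝕜 => s ^ n) 0 = n := by
  simpa only [sub_zero] using! analyticOrderAt_centeredMonomial (𝕜 := 𝕜) (z₀ := 0) (n := n)

lemma analyticOrderAt_comp_pow {E : Type*} [NormedAddCommGroup E] [NormedSpace 𝕜 E] {f : 𝕜 → E}
    {q : ℕ} (hf : AnalyticAt 𝕜 f 0) (hq : q ≠ 0) :
    analyticOrderAt (fun s => f (s ^ q)) 0 = analyticOrderAt f 0 * q := by
  have hcomp := AnalyticAt.analyticOrderAt_comp (g := fun s : 𝕜 => s ^ q) (z₀ := 0)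
    (by simpa only [zero_pow hq] using hf) (by fun_prop)
  simpa only [zero_pow hq, sub_zero, analyticOrderAt_zero_pow] using! hcomp

lemma exists_eq_pow_mul_of_le_analyticOrderAt {f : 𝕜 → 𝕜} {n : ℕ} (hf : AnalyticAt 𝕜 f 0)
    (hn : n ≤ analyticOrderAt f 0) :
    ∃ h : 𝕜 → 𝕜, AnalyticAt 𝕜 h 0 ∧ (∀ᶠ z in 𝓝 0, f z = z ^ n * h z) ∧
      analyticOrderAt f 0 = n + analyticOrderAt h 0 := by
  obtain ⟨h, hh, hfh⟩ := (natCast_le_analyticOrderAt hf).1 hn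
  simp only [sub_zero, smul_eq_mul] at hfh
  refine ⟨h, hh, hfh, ?_⟩
  rw [analyticOrderAt_congr hfh, ← analyticOrderAt_zero_pow (𝕜 := 𝕜)]
  exact analyticOrderAt_mul (by fun_prop) hh

open Polynomial in
lemma analyticOrderAt_polynomial_eval {P : 𝕜[X]} (hP : P ≠ 0) (w : 𝕜) :
    analyticOrderAt (fun z => P.eval z) w = P.rootMultiplicity w := by
  obtain ⟨Q, hPQ, hQ⟩ := P.exists_eq_pow_rootMultiplicity_mul_and_not_dvd hP w
  have han (P : 𝕜[X]) : AnalyticAt 𝕜 (fun z => P.eval z) w := by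
    simpa using AnalyticOnNhd.eval_polynomial P w (Set.mem_univ w)
  refine (han P).analyticOrderAt_eq_natCast.2 ⟨fun z => Q.eval z, han Q, ?_, .of_forall fun z => ?_⟩
  · rwa [Ne, ← IsRoot.def, ← dvd_iff_isRoot]
  · simpa using congrArg (eval z) hPQ

/-- `p / q` is the least slope in the Newton polygon of `z ^ n + ∑ i, z ^ (n - d i) * g i`. -/
theorem exists_newton_slope {ι : Type*} [Finite ι] {d : ι → ℕ} {g : ι → 𝕜 → 𝕜}
    (hd : ∀ i, d i ≠ 0) (hg : ∀ i, AnalyticAt 𝕜 (g i) 0) (hg0 : ∀ i, g i 0 = 0)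
    (hne : ∃ i, ¬ ∀ᶠ w in 𝓝 0, g i w = 0) :
    ∃ p ≠ 0, ∃ q ≠ 0, ∃ h : ι → 𝕜 → 𝕜, (∀ i, AnalyticAt 𝕜 (h i) 0) ∧
      (∀ i, ∀ᶠ s in 𝓝 0, g i (s ^ q) = s ^ (p * d i) * h i s) ∧ ∃ i, h i 0 ≠ 0 := by
  have := Fintype.ofFinite ι
  have : Nonempty ι := hne.nonempty
  have hdvd (i : ι) : ∃ e, ∏ i, d i = d i * e := Finset.dvd_prod_of_mem d (Finset.mem_univ i)
  choose e he using hdvd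
  have hq : ∏ i, d i ≠ 0 := Finset.prod_ne_zero_iff.2 fun i _ => hd i
  have he0 (i : ι) : e i ≠ 0 := right_ne_zero_of_mul (he i ▸ hq)
  obtain ⟨i₀, hmin⟩ := Finite.exists_min fun i => e i * analyticOrderAt (g i) 0
  obtain ⟨p, hp⟩ : ∃ p : ℕ, (p : ℕ∞) = e i₀ * analyticOrderAt (g i₀) 0 := by
    obtain ⟨i, hi⟩ := hne
    refine ENat.ne_top_iff_exists.1 (ne_top_of_le_ne_top ?_ (hmin i))
    exact WithTop.mul_ne_top (ENat.natCast_ne_top _) (mt analyticOrderAt_eq_top.1 hi)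
  have hp0 : p ≠ 0 := by
    rintro rfl
    exact mul_ne_zero (Nat.cast_ne_zero.2 (he0 i₀))
      ((hg i₀).analyticOrderAt_ne_zero.2 (hg0 i₀)) hp.symm
  have han (i : ι) : AnalyticAt 𝕜 (fun s => g i (s ^ ∏ i, d i)) 0 :=
    AnalyticAt.fun_comp (by simpa only [zero_pow hq] using hg i) (by fun_prop)
  have horder (i : ι) : analyticOrderAt (fun s => g i (s ^ ∏ i, d i)) 0 =
      (e i * analyticOrderAt (g i) 0) * d i := by
    rw [analyticOrderAt_comp_pow (hg i) hq, he i]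
    push_cast
    ring
  have hle (i : ι) : (p * d i : ℕ) ≤ analyticOrderAt (fun s => g i (s ^ ∏ i, d i)) 0 := by
    rw [horder, Nat.cast_mul, hp]
    exact mul_le_mul_left (hmin i) _
  choose h hh hgh hgh_order using fun i => exists_eq_pow_mul_of_le_analyticOrderAt (han i) (hle i)
  refine ⟨p, hp0, _, hq, h, hh, hgh, i₀, (hh i₀).analyticOrderAt_eq_zero.1 ?_⟩
  refine ENat.add_right_injective_of_ne_top (ENat.natCast_ne_top (p * d i₀))
    ((hgh_order i₀).symm.trans ?_)
  simp only [horder, ← hp, add_zero, Nat.cast_mul]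

end AnalyticOrder

open Polynomial in
lemma exists_rootMultiplicity_pos_lt_natDegree {K : Type*} [Field K] [IsAlgClosed K] [CharZero K]
    {P : K[X]} (hnext : P.nextCoeff = 0) (hcoeff : ∃ j < P.natDegree, P.coeff j ≠ 0) :
    ∃ w, 0 < P.rootMultiplicity w ∧ P.rootMultiplicity w < P.natDegree := by
  obtain ⟨j, hj, hPj⟩ := hcoeff
  have hP : P ≠ 0 := ne_zero_of_natDegree_gt hj
  obtain ⟨w, hw⟩ := IsAlgClosed.exists_root P (degree_ne_of_natDegree_ne (Nat.ne_zero_of_lt hj))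
  refine ⟨w, (rootMultiplicity_pos hP).2 hw, lt_of_not_ge fun hle => hPj ?_⟩
  obtain ⟨Q, hQ⟩ := (pow_dvd_pow _ hle).trans (P.pow_rootMultiplicity_dvd w)
  have hQ0 : Q ≠ 0 := right_ne_zero_of_mul (hQ ▸ hP)
  have hdeg := congrArg natDegree hQ
  rw [natDegree_mul (pow_ne_zero _ (X_sub_C_ne_zero w)) hQ0, natDegree_pow, natDegree_X_sub_C,
    mul_one, left_eq_add] at hdeg
  obtain ⟨c, rfl⟩ := natDegree_eq_zero.1 hdeg
  have hw0 : w = 0 := by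
    rw [hQ, nextCoeff_mul_C, (monic_X_sub_C w).nextCoeff_pow, nextCoeff_X_sub_C] at hnext
    simpa [Nat.ne_zero_of_lt hj, C_ne_zero.1 hQ0] using hnext
  rw [hQ, hw0, C_0, sub_zero, coeff_mul_C, coeff_X_pow, if_neg hj.ne, zero_mul]

section DepressedForm

/-- The Tschirnhaus normal form of a function `G` of `(w, z)` with a zero of order `n + 1` along
`w = 0`: the Taylor expansion of `G` in `z` has no term in `z ^ n`. The coefficient `g j` belongs
to `z ^ j`, and `R` collects the terms of degree at least `n + 1`. -/
structure IsDepressedForm {𝕜 : Type*} [NontriviallyNormedField 𝕜] (G : 𝕜 × 𝕜 → 𝕜) (n : ℕ)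
    (g : Fin n → 𝕜 → 𝕜) (R : 𝕜 × 𝕜 → 𝕜) : Prop where
  analyticAt_coeff (j : Fin n) : AnalyticAt 𝕜 (g j) 0
  coeff_zero (j : Fin n) : g j 0 = 0
  analyticAt_remainder : AnalyticAt 𝕜 R 0
  remainder_zero : R 0 ≠ 0
  eventually_eq : ∀ᶠ p in 𝓝 (0 : 𝕜 × 𝕜),
    G p = ∑ j : Fin n, p.2 ^ (j : ℕ) * g j p.1 + p.2 ^ (n + 1) * R p

variable {G : ℂ × ℂ → ℂ} {n : ℕ}

lemma analyticAt_slice (hG : AnalyticAt ℂ G 0) : AnalyticAt ℂ (fun z => G (0, z)) 0 :=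
  hG.fun_comp (f := fun z : ℂ => ((0 : ℂ), z)) (by fun_prop)

lemma exists_shift_iteratedDeriv_eq_zero (hG : AnalyticAt ℂ G 0)
    (hord : analyticOrderAt (fun z => G (0, z)) 0 = (n + 1 : ℕ)) :
    ∃ a : ℂ → ℂ, AnalyticAt ℂ a 0 ∧ a 0 = 0 ∧
      ∀ᶠ w in 𝓝 0, iteratedDeriv n (fun z => G (w, z + a w)) 0 = 0 := by
  obtain ⟨hlow, htop⟩ :=
    (analyticOrderAt_eq_nat_iff_iteratedDeriv_eq_zero (analyticAt_slice hG)).1 hord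
  obtain ⟨a, ha, ha0, haG⟩ := exists_analyticAt_implicit (analyticAt_iteratedDeriv_slice hG n)
    (by rwa [iteratedDeriv_succ] at htop)
  refine ⟨a, ha, ha0, haG.mono fun w hw => ?_⟩
  simp only [iteratedDeriv_comp_add_const n (fun z => G (w, z)), zero_add]
  exact hw.trans (hlow n n.lt_succ_self)

lemma eventually_iterate_sliceDslope_eq (hG : AnalyticAt ℂ G 0) (n : ℕ) :
    ∀ᶠ w in 𝓝 0, (sliceDslope 0)^[n] G (w, 0) =
      iteratedDeriv n (fun z => G (w, z)) 0 / n.factorial := by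
  have hincl : Tendsto (fun w : ℂ => (w, (0 : ℂ))) (𝓝 0) (𝓝 0) :=
    (Continuous.prodMk_left 0).tendsto 0
  filter_upwards [hincl.eventually hG.eventually_analyticAt] with w hw
  exact iterate_sliceDslope_eq_iteratedDeriv
    (AnalyticAt.fun_comp (f := fun z : ℂ => (w, z)) hw (by fun_prop)) n

lemma exists_isDepressedForm (hG : AnalyticAt ℂ G 0)
    (hord : analyticOrderAt (fun z => G (0, z)) 0 = (n + 1 : ℕ))
    (hn : ∀ᶠ w in 𝓝 0, iteratedDeriv n (fun z => G (w, z)) 0 = 0) :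
    ∃ g R, IsDepressedForm G n g R := by
  obtain ⟨hlow, htop⟩ :=
    (analyticOrderAt_eq_nat_iff_iteratedDeriv_eq_zero (analyticAt_slice hG)).1 hord
  have hD (j : ℕ) : AnalyticAt ℂ ((sliceDslope 0)^[j] G) 0 := analyticAt_iterate_sliceDslope hG j
  have hD0 (j : ℕ) := (eventually_iterate_sliceDslope_eq hG j).self_of_nhds
  refine ⟨fun j w => (sliceDslope 0)^[j] G (w, 0), (sliceDslope 0)^[n + 1] G, fun j => ?_,
    fun j => ?_, hD (n + 1), ?_, ?_⟩
  · exact (hD j).fun_comp (f := fun w : ℂ => (w, (0 : ℂ))) (by fun_prop)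
  · rw [hD0, hlow j (by lia), zero_div]
  · rw [← Prod.mk_zero_zero, hD0]
    exact div_ne_zero htop (Nat.cast_ne_zero.2 (n + 1).factorial_ne_zero)
  · have hcoeff : ∀ᶠ w in 𝓝 0, (sliceDslope 0)^[n] G (w, 0) = 0 := by
      filter_upwards [eventually_iterate_sliceDslope_eq hG n, hn] with w hw hnw
      rw [hw, hnw, zero_div]
    filter_upwards [continuous_fst.tendsto (0 : ℂ × ℂ) |>.eventually hcoeff] with p hp
    rw [eq_sum_iterate_sliceDslope_add 0 G (n + 1) p, Finset.sum_range_succ, hp, mul_zero, add_zero,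
      sub_zero, Finset.sum_range]

end DepressedForm

section EdgePolynomial

open Polynomial

/-- The polynomial `∑ j, c j * X ^ j + r * X ^ (n + 1)`, without a term in `X ^ n`. It is the edge
polynomial of a Newton polygon in depressed form. -/
noncomputable def edgePolynomial {K : Type*} [Semiring K] {n : ℕ} (c : Fin n → K) (r : K) : K[X] :=
  ∑ j : Fin n, C (c j) * X ^ (j : ℕ) + C r * X ^ (n + 1)

variable {K : Type*} [Semiring K] {n : ℕ} (c : Fin n → K) {r : K}

lemma degree_sum_C_mul_X_pow_lt : (∑ j : Fin n, C (c j) * X ^ (j : ℕ) : K[X]).degree < n :=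
  (degree_sum_le _ _).trans_lt <| (Finset.sup_lt_iff (WithBot.bot_lt_coe n)).2 fun j _ =>
    (degree_C_mul_X_pow_le _ _).trans_lt (Nat.cast_lt.2 j.2)

lemma natDegree_edgePolynomial (hr : r ≠ 0) : (edgePolynomial c r).natDegree = n + 1 := by
  refine natDegree_eq_of_degree_eq_some ?_
  rw [edgePolynomial, degree_add_eq_right_of_degree_lt] <;> rw [degree_C_mul_X_pow _ hr]
  exact (degree_sum_C_mul_X_pow_lt c).trans (mod_cast n.lt_succ_self)

lemma nextCoeff_edgePolynomial (hr : r ≠ 0) : (edgePolynomial c r).nextCoeff = 0 := by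
  rw [nextCoeff_of_natDegree_pos (by simp [natDegree_edgePolynomial c hr]),
    natDegree_edgePolynomial c hr, Nat.add_sub_cancel, edgePolynomial, coeff_add,
    coeff_eq_zero_of_degree_lt (degree_sum_C_mul_X_pow_lt c)]
  simp

lemma coeff_edgePolynomial (r : K) (j : Fin n) : (edgePolynomial c r).coeff j = c j := by
  simp [edgePolynomial, coeff_X_pow, Fin.val_inj, (j.2.trans n.lt_succ_self).ne]

lemma exists_rootMultiplicity_edgePolynomial {K : Type*} [Field K] [IsAlgClosed K] [CharZero K]
    {n : ℕ} {c : Fin n → K} {r : K} (hr : r ≠ 0) (hc : ∃ j, c j ≠ 0) :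
    ∃ w, 0 < (edgePolynomial c r).rootMultiplicity w ∧
      (edgePolynomial c r).rootMultiplicity w < n + 1 := by
  rw [← natDegree_edgePolynomial c hr]
  refine exists_rootMultiplicity_pos_lt_natDegree (nextCoeff_edgePolynomial c hr) ?_
  obtain ⟨j, hj⟩ := hc
  refine ⟨j, ?_, (coeff_edgePolynomial c r j).trans_ne hj⟩
  rw [natDegree_edgePolynomial c hr]
  exact j.2.trans n.lt_succ_self

end EdgePolynomial

section NewtonTransform

variable {𝕜 : Type*} [NontriviallyNormedField 𝕜] {n p q : ℕ} {h g : Fin n → 𝕜 → 𝕜}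
  {G R : 𝕜 × 𝕜 → 𝕜} {w : 𝕜}

/-- The quotient of a depressed form by `s ^ (p * (n + 1))` after the substitution of
`(s ^ q, s ^ p * (w + v))`, where `h j` is the quotient of the `j`-th coefficient at `s ^ q` by
`s ^ (p * (n + 1 - j))`. Its zeros near `0` are the zeros of the depressed form whose expansion
begins with `w * s ^ p`. -/
def newtonTransform (h : Fin n → 𝕜 → 𝕜) (R : 𝕜 × 𝕜 → 𝕜) (p q : ℕ) (w : 𝕜) (v : 𝕜 × 𝕜) : 𝕜 :=
  ∑ j : Fin n, (w + v.2) ^ (j : ℕ) * h j v.1 +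
    (w + v.2) ^ (n + 1) * R (v.1 ^ q, v.1 ^ p * (w + v.2))

lemma analyticAt_newtonTransform (hh : ∀ j, AnalyticAt 𝕜 (h j) 0) (hR : AnalyticAt 𝕜 R 0)
    (hp : p ≠ 0) (hq : q ≠ 0) : AnalyticAt 𝕜 (newtonTransform h R p q w) 0 := by
  have hfst : AnalyticAt 𝕜 (fun v : 𝕜 × 𝕜 => v.1) 0 := analyticAt_fst
  have hsnd : AnalyticAt 𝕜 (fun v : 𝕜 × 𝕜 => v.2) 0 := analyticAt_snd
  have hh' (j : Fin n) : AnalyticAt 𝕜 (fun v : 𝕜 × 𝕜 => h j v.1) 0 :=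
    AnalyticAt.fun_comp (f := fun v : 𝕜 × 𝕜 => v.1) (hh j) hfst
  have hR' : AnalyticAt 𝕜 (fun v : 𝕜 × 𝕜 => R (v.1 ^ q, v.1 ^ p * (w + v.2))) 0 :=
    AnalyticAt.fun_comp (f := fun v : 𝕜 × 𝕜 => (v.1 ^ q, v.1 ^ p * (w + v.2)))
      (by simpa [hp, hq, ← Prod.zero_eq_mk] using hR) (by fun_prop)
  refine .fun_add (Finset.univ.analyticAt_fun_sum fun j _ => ?_)
    (.fun_mul (by fun_prop) hR')
  exact .fun_mul (by fun_prop) (hh' j)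

lemma newtonTransform_zero_left (hp : p ≠ 0) (hq : q ≠ 0) (v : 𝕜) :
    newtonTransform h R p q w (0, v) =
      (edgePolynomial (fun j => h j 0) (R 0)).eval (w + v) := by
  simp [newtonTransform, edgePolynomial, Polynomial.eval_finsetSum, hp, hq, mul_comm (R 0),
    mul_comm (h _ 0), ← Prod.zero_eq_mk]

lemma analyticOrderAt_newtonTransform_slice [CharZero 𝕜] [CompleteSpace 𝕜] (hp : p ≠ 0) (hq : q ≠ 0)
    (hR0 : R 0 ≠ 0) :
    analyticOrderAt (fun v => newtonTransform h R p q w (0, v)) 0 =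
      (edgePolynomial (fun j => h j 0) (R 0)).rootMultiplicity w := by
  have hP : edgePolynomial (fun j => h j 0) (R 0) ≠ 0 :=
    Polynomial.ne_zero_of_natDegree_gt (n := n) (by simp [natDegree_edgePolynomial _ hR0])
  simp only [newtonTransform_zero_left hp hq]
  rw [← analyticOrderAt_polynomial_eval hP]
  have := analyticOrderAt_comp_of_deriv_ne_zero
    (f := fun z => (edgePolynomial (fun j => h j 0) (R 0)).eval z)
    (g := fun v => w + v) (z₀ := 0) (by fun_prop) (by simp)
  simpa only [add_zero] using! this

lemma IsDepressedForm.eventually_eq_newtonTransform (hG : IsDepressedForm G n g R) (hp : p ≠ 0)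
    (hq : q ≠ 0) (hgh : ∀ j, ∀ᶠ s in 𝓝 0, g j (s ^ q) = s ^ (p * (n + 1 - j)) * h j s) (w : 𝕜) :
    ∀ᶠ v in 𝓝 (0 : 𝕜 × 𝕜), G (v.1 ^ q, v.1 ^ p * (w + v.2)) =
      v.1 ^ (p * (n + 1)) * newtonTransform h R p q w v := by
  have hsubst : Tendsto (fun v : 𝕜 × 𝕜 => (v.1 ^ q, v.1 ^ p * (w + v.2))) (𝓝 0) (𝓝 0) := by
    have : Continuous fun v : 𝕜 × 𝕜 => (v.1 ^ q, v.1 ^ p * (w + v.2)) := by fun_prop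
    simpa [hp, hq, ← Prod.zero_eq_mk] using this.tendsto 0
  filter_upwards [hsubst.eventually hG.eventually_eq,
    continuous_fst.tendsto (0 : 𝕜 × 𝕜) |>.eventually (eventually_all.2 hgh)] with v hGv hghv
  rw [hGv, newtonTransform, mul_add (v.1 ^ (p * (n + 1))), Finset.mul_sum]
  congr 1
  · refine Finset.sum_congr rfl fun j _ => ?_
    have hexp : p * (n + 1) = p * j + p * (n + 1 - j) := by
      rw [← mul_add, Nat.add_sub_cancel' (by lia)]
    rw [hghv, hexp, pow_add, mul_pow, pow_mul]
    ring
  · rw [mul_pow, ← pow_mul, mul_assoc]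

lemma IsDepressedForm.exists_newtonTransform [IsAlgClosed 𝕜] [CharZero 𝕜] [CompleteSpace 𝕜]
    (hG : IsDepressedForm G n g R) (hne : ∃ j, ¬ ∀ᶠ w in 𝓝 0, g j w = 0) :
    ∃ p ≠ 0, ∃ q ≠ 0, ∃ (h : Fin n → 𝕜 → 𝕜) (w : 𝕜),
      AnalyticAt 𝕜 (newtonTransform h R p q w) 0 ∧
      (∀ᶠ v in 𝓝 (0 : 𝕜 × 𝕜), G (v.1 ^ q, v.1 ^ p * (w + v.2)) =
        v.1 ^ (p * (n + 1)) * newtonTransform h R p q w v) ∧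
      ∃ k : ℕ, 0 < k ∧ k < n + 1 ∧
        analyticOrderAt (fun v => newtonTransform h R p q w (0, v)) 0 = k := by
  obtain ⟨p, hp, q, hq, h, hh, hgh, hh0⟩ :=
    exists_newton_slope (d := fun j : Fin n => n + 1 - j) (fun j => by lia) hG.analyticAt_coeff
      hG.coeff_zero hne
  obtain ⟨w, hw_pos, hw_lt⟩ := exists_rootMultiplicity_edgePolynomial hG.remainder_zero hh0
  exact ⟨p, hp, q, hq, h, w, analyticAt_newtonTransform hh hG.analyticAt_remainder hp hq,
    hG.eventually_eq_newtonTransform hp hq hgh w, _, hw_pos, hw_lt,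
    analyticOrderAt_newtonTransform_slice hp hq hG.remainder_zero⟩

end NewtonTransform

section PuiseuxBranch

variable {𝕜 : Type*} [NontriviallyNormedField 𝕜] {G H : 𝕜 × 𝕜 → 𝕜}

/-- `G (w, z) = 0` has a Puiseux series solution `z = y (w ^ (1 / k))` through the origin, with
the fractional power replaced by the substitution `w = t ^ k`. -/
def HasPuiseuxBranch (G : 𝕜 × 𝕜 → 𝕜) : Prop :=
  ∃ k ≠ 0, ∃ y : 𝕜 → 𝕜, AnalyticAt 𝕜 y 0 ∧ y 0 = 0 ∧ ∀ᶠ t in 𝓝 0, G (t ^ k, y t) = 0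

lemma HasPuiseuxBranch.of_pullback {q : ℕ} {ψ : 𝕜 × 𝕜 → 𝕜} (hH : HasPuiseuxBranch H) (hq : q ≠ 0)
    (hψ : AnalyticAt 𝕜 ψ 0) (hψ0 : ψ 0 = 0)
    (hHG : ∀ᶠ p in 𝓝 0, H p = 0 → G (p.1 ^ q, ψ p) = 0) : HasPuiseuxBranch G := by
  obtain ⟨k, hk, y, hy, hy0, hHy⟩ := hH
  have hcurve : AnalyticAt 𝕜 (fun t => (t ^ k, y t)) 0 := by fun_prop
  have hcurve0 : ((0 : 𝕜) ^ k, y 0) = 0 := by simp [hk, hy0]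
  refine ⟨k * q, mul_ne_zero hk hq, fun t => ψ (t ^ k, y t),
    AnalyticAt.fun_comp (hcurve0 ▸ hψ) hcurve, (congrArg ψ hcurve0).trans hψ0, ?_⟩
  filter_upwards [hHy, (hcurve0 ▸ hcurve.continuousAt.tendsto).eventually hHG] with t ht hG
  rw [pow_mul]
  exact hG ht

lemma IsDepressedForm.hasPuiseuxBranch_of_eventually_eq_zero {n : ℕ} {g : Fin n → 𝕜 → 𝕜}
    {R : 𝕜 × 𝕜 → 𝕜} (hG : IsDepressedForm G n g R) (hg : ∀ j, ∀ᶠ w in 𝓝 0, g j w = 0) :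
    HasPuiseuxBranch G := by
  have hincl : Tendsto (fun w : 𝕜 => (w, (0 : 𝕜))) (𝓝 0) (𝓝 0) :=
    (Continuous.prodMk_left 0).tendsto 0
  refine ⟨1, one_ne_zero, 0, analyticAt_const, rfl, ?_⟩
  filter_upwards [hincl.eventually hG.eventually_eq, eventually_all.2 hg] with w hGw hgw
  simp [hGw, hgw]

lemma IsDepressedForm.hasPuiseuxBranch [IsAlgClosed 𝕜] [CharZero 𝕜] [CompleteSpace 𝕜]
    {n : ℕ} {g : Fin n → 𝕜 → 𝕜} {R : 𝕜 × 𝕜 → 𝕜} (hG : IsDepressedForm G n g R)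
    (ih : ∀ k < n + 1, 0 < k → ∀ H : 𝕜 × 𝕜 → 𝕜, AnalyticAt 𝕜 H 0 →
      analyticOrderAt (fun z => H (0, z)) 0 = k → HasPuiseuxBranch H) :
    HasPuiseuxBranch G := by
  by_cases hg : ∀ j, ∀ᶠ w in 𝓝 0, g j w = 0
  · exact hG.hasPuiseuxBranch_of_eventually_eq_zero hg
  obtain ⟨p, hp, q, hq, h, w, hanalytic, hsubst, k, hk_pos, hk_lt, hord⟩ :=
    hG.exists_newtonTransform (not_forall.1 hg)
  have hfst : AnalyticAt 𝕜 (fun v : 𝕜 × 𝕜 => v.1) 0 := analyticAt_fst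
  have hsnd : AnalyticAt 𝕜 (fun v : 𝕜 × 𝕜 => v.2) 0 := analyticAt_snd
  refine (ih k hk_lt hk_pos _ hanalytic hord).of_pullback hq
    (ψ := fun v => v.1 ^ p * (w + v.2)) (by fun_prop) (by simp [hp]) ?_
  filter_upwards [hsubst] with v hv hzero
  rw [hv, hzero, mul_zero]

theorem hasPuiseuxBranch_of_analyticOrderAt_eq {G : ℂ × ℂ → ℂ} {m : ℕ} (hm : 0 < m)
    (hG : AnalyticAt ℂ G 0) (hord : analyticOrderAt (fun z => G (0, z)) 0 = m) :
    HasPuiseuxBranch G := by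
  induction m using Nat.strong_induction_on generalizing G with
  | h m ih =>
    obtain ⟨n, rfl⟩ := Nat.exists_eq_add_one.2 hm
    obtain ⟨a, ha, ha0, hshift⟩ := exists_shift_iteratedDeriv_eq_zero hG hord
    have hψ : AnalyticAt ℂ (fun p : ℂ × ℂ => p.2 + a p.1) 0 :=
      analyticAt_snd.add (AnalyticAt.fun_comp (f := fun p : ℂ × ℂ => p.1) ha analyticAt_fst)
    have hG' : AnalyticAt ℂ (fun p : ℂ × ℂ => G (p.1, p.2 + a p.1)) 0 :=
      AnalyticAt.fun_comp (by simpa [ha0, ← Prod.zero_eq_mk] using hG) (analyticAt_fst.prod hψ)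
    obtain ⟨g, R, hform⟩ := exists_isDepressedForm hG' (by simpa [ha0] using hord) hshift
    refine (hform.hasPuiseuxBranch fun k hk hk_pos H hH hHord =>
      ih k hk hk_pos hH hHord).of_pullback one_ne_zero hψ (by simp [ha0]) ?_
    simp only [pow_one, imp_self, eventually_true]

end PuiseuxBranch

section Preimages

variable {F : ℂ × ℂ → ℂ} {γ : ℂ → ℂ} {lam0 : ℂ}

lemma exists_preimage_branch {z : ℂ} (hF : AnalyticAt ℂ F (lam0, z)) (hγ : AnalyticAt ℂ γ lam0)
    (hpre : F (lam0, z) = γ lam0) (hne : ¬ ∀ᶠ v in 𝓝 z, F (lam0, v) = γ lam0) :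
    ∃ k ≠ 0, ∃ x : ℂ → ℂ, AnalyticAt ℂ x 0 ∧ x 0 = z ∧
      ∀ᶠ t in 𝓝 0, F (lam0 + t ^ k, x t) = γ (lam0 + t ^ k) := by
  let G : ℂ × ℂ → ℂ := fun p => F (lam0 + p.1, z + p.2) - γ (lam0 + p.1)
  have hfst : AnalyticAt ℂ (fun p : ℂ × ℂ => p.1) 0 := analyticAt_fst
  have hsnd : AnalyticAt ℂ (fun p : ℂ × ℂ => p.2) 0 := analyticAt_snd
  have hG : AnalyticAt ℂ G 0 :=
    .fun_sub
      (AnalyticAt.fun_comp (f := fun p : ℂ × ℂ => (lam0 + p.1, z + p.2)) (by simpa using hF)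
        (by fun_prop))
      (AnalyticAt.fun_comp (f := fun p : ℂ × ℂ => lam0 + p.1) (by simpa using hγ) (by fun_prop))
  have htop : analyticOrderAt (fun v => G (0, v)) 0 ≠ ⊤ := fun h => hne <| by
    rw [analyticOrderAt_eq_top] at h
    filter_upwards [(tendsto_sub_nhds_zero_iff.2 tendsto_id).eventually h] with v hv
    simpa [G, sub_eq_zero] using hv
  obtain ⟨m, hm⟩ := ENat.ne_top_iff_exists.1 htop
  have hm0 : m ≠ 0 := by
    rintro rfl
    exact (analyticAt_slice hG).analyticOrderAt_ne_zero.2 (by simp [G, hpre]) hm.symm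
  obtain ⟨k, hk, y, hy, hy0, hGy⟩ :=
    hasPuiseuxBranch_of_analyticOrderAt_eq (Nat.pos_of_ne_zero hm0) hG hm.symm
  exact ⟨k, hk, fun t => z + y t, analyticAt_const.add hy, by simp [hy0],
    hGy.mono fun t ht => sub_eq_zero.1 ht⟩

lemma exists_common_preimage_branch {ι : Type*} [Finite ι] {z : ι → ℂ}
    (hF : ∀ i, AnalyticAt ℂ F (lam0, z i)) (hγ : AnalyticAt ℂ γ lam0)
    (hpre : ∀ i, F (lam0, z i) = γ lam0) (hne : ∀ i, ¬ ∀ᶠ v in 𝓝 (z i), F (lam0, v) = γ lam0) :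
    ∃ K ≠ 0, ∃ x : ι → ℂ → ℂ, ∀ i, AnalyticAt ℂ (x i) 0 ∧ x i 0 = z i ∧
      ∀ᶠ t in 𝓝 0, F (lam0 + t ^ K, x i t) = γ (lam0 + t ^ K) := by
  have := Fintype.ofFinite ι
  choose k hk x hx hx0 hFx using fun i => exists_preimage_branch (hF i) hγ (hpre i) (hne i)
  have hdvd (i : ι) : ∃ e, ∏ i, k i = k i * e := Finset.dvd_prod_of_mem k (Finset.mem_univ i)
  choose e he using hdvd
  have hK : ∏ i, k i ≠ 0 := Finset.prod_ne_zero_iff.2 fun i _ => hk i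
  have he0 (i : ι) : e i ≠ 0 := right_ne_zero_of_mul (he i ▸ hK)
  refine ⟨_, hK, fun i t => x i (t ^ e i), fun i => ⟨?_, ?_, ?_⟩⟩
  · exact AnalyticAt.fun_comp (by simpa only [zero_pow (he0 i)] using hx i) (by fun_prop)
  · simp only [zero_pow (he0 i), hx0]
  · have hpow : Tendsto (fun t : ℂ => t ^ e i) (𝓝 0) (𝓝 0) :=
      (continuous_pow (e i)).tendsto' 0 0 (zero_pow (he0 i))
    filter_upwards [hpow.eventually (hFx i)] with t ht
    rwa [he, mul_comm, pow_mul]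

lemma exists_preimage_branch_on_unitBall {ι : Type*} [Finite ι] {z : ι → ℂ} {S U : Set ℂ}
    (hS : IsOpen S) (hU : IsOpen U) (hF : DifferentiableOn ℂ F (S ×ˢ U))
    (hγ : DifferentiableOn ℂ γ S) (hlam0 : lam0 ∈ S) (hzU : ∀ i, z i ∈ U)
    (hpre : ∀ i, F (lam0, z i) = γ lam0) (hne : ∀ i, ¬ ∀ᶠ v in 𝓝 (z i), F (lam0, v) = γ lam0) :
    ∃ K ≠ 0, ∃ ρ : ℝ, 0 < ρ ∧ Set.MapsTo (fun t : ℂ => lam0 + (ρ * t) ^ K) (ball 0 1) S ∧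
      ∃ x : ι → ℂ → ℂ, ∀ i, DifferentiableOn ℂ (x i) (ball 0 1) ∧ Set.MapsTo (x i) (ball 0 1) U ∧
        x i 0 = z i ∧ ∀ t ∈ ball 0 1, F (lam0 + (ρ * t) ^ K, x i t) = γ (lam0 + (ρ * t) ^ K) := by
  have hFan (i : ι) : AnalyticAt ℂ F (lam0, z i) := by
    refine analyticAt_of_eventually_differentiableAt ?_
    filter_upwards [(hS.prod hU).mem_nhds ⟨hlam0, hzU i⟩] with p hp
    exact hF.differentiableAt ((hS.prod hU).mem_nhds hp)
  obtain ⟨K, hK, x, hx⟩ :=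
    exists_common_preimage_branch hFan (hγ.analyticAt (hS.mem_nhds hlam0)) hpre hne
  have hxU : ∀ᶠ t in 𝓝 0, ∀ i, x i t ∈ U := eventually_all.2 fun i =>
    (hx i).1.continuousAt.eventually_mem (hU.mem_nhds ((hx i).2.1 ▸ hzU i))
  have hparam : ∀ᶠ t in 𝓝 0, lam0 + t ^ K ∈ S :=
    ContinuousAt.eventually_mem (f := fun t => lam0 + t ^ K) (by fun_prop)
      (hS.mem_nhds (by simpa [hK] using hlam0))
  obtain ⟨ρ, hρ, hball⟩ := Metric.eventually_nhds_iff_ball.1 <|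
    hparam.and <| hxU.and <| eventually_all.2 fun i =>
      (hx i).1.eventually_analyticAt.and (hx i).2.2
  have hscale : Set.MapsTo (fun t : ℂ => ρ * t) (ball 0 1) (ball 0 ρ) := fun t ht => by
    simpa [abs_of_pos hρ] using mul_lt_mul_of_pos_left (mem_ball_zero_iff.1 ht) hρ
  refine ⟨K, hK, ρ, hρ, fun t ht => (hball _ (hscale ht)).1, fun i t => x i (ρ * t),
    fun i => ⟨?_, fun t ht => (hball _ (hscale ht)).2.1 i, by simpa using (hx i).2.1,
      fun t ht => ((hball _ (hscale ht)).2.2 i).2⟩⟩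
  have hxi : DifferentiableOn ℂ (x i) (ball 0 ρ) := fun t ht =>
    ((hball t ht).2.2 i).1.differentiableAt.differentiableWithinAt
  exact hxi.fun_comp (by fun_prop) hscale

lemma not_eventually_eq_of_not_constant {f : ℂ → ℂ} {U : Set ℂ} {z c : ℂ} (hU : IsOpen U)
    (hUconn : IsPreconnected U) (hf : DifferentiableOn ℂ f U) (hnc : ¬ ∃ c, ∀ v ∈ U, f v = c)
    (hz : z ∈ U) : ¬ ∀ᶠ v in 𝓝 z, f v = c := fun h =>
  hnc ⟨c, (hf.analyticOnNhd hU).eqOn_of_preconnected_of_eventuallyEq analyticOnNhd_const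
    hUconn hz h⟩

end Preimages

section PowerCovering

lemma exists_isCoveringMap_restrict {X Y : Type*} [TopologicalSpace X] [TopologicalSpace Y]
    {f : X → Y} {s : Set X} {t : Set Y} (hf : IsCoveringMapOn f t) (hst : f ⁻¹' t = s) :
    ∃ hmaps : Set.MapsTo f s t, IsCoveringMap hmaps.restrict := by
  subst hst
  exact ⟨Set.mapsTo_preimage f t, hf.isCoveringMap_restrictPreimage⟩

variable {a c : ℂ} {ρ : ℝ} {K : ℕ}

open Polynomial in
lemma isCoveringMapOn_add_mul_pow (c : ℂ) (ha : a ≠ 0) (hK : K ≠ 0) :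
    IsCoveringMapOn (fun t => c + (a * t) ^ K) {c}ᶜ := by
  let P : ℂ[X] := C c + (C a * X) ^ K
  have hP : P.eval = fun t => c + (a * t) ^ K := by
    ext t
    simp [P]
  refine hP ▸ P.isCoveringMapOn_eval.mono ?_
  rintro _ hv ⟨t, ht, rfl⟩
  refine hv ?_
  have hderiv : P.derivative.eval t = K * (a * t) ^ (K - 1) * a := by
    simp [P, derivative_pow]
  have ht0 : t = 0 := by
    have hzero : (K : ℂ) * (a * t) ^ (K - 1) * a = 0 := hderiv ▸ ht
    have hpow : (a * t) ^ (K - 1) = 0 := by simpa [hK, ha] using hzero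
    exact (mul_eq_zero.1 (eq_zero_of_pow_eq_zero hpow)).resolve_left ha
  simp [P, ht0, hK]

lemma add_mul_pow_mem_ball_iff (hρ : 0 < ρ) (hK : K ≠ 0) {t : ℂ} :
    c + (ρ * t) ^ K ∈ ball c (ρ ^ K) ↔ t ∈ ball 0 1 := by
  simp only [mem_ball, dist_self_add_left, norm_pow, norm_mul, dist_zero_right, Complex.norm_real,
    Real.norm_of_nonneg hρ.le]
  rw [pow_lt_pow_iff_left₀ (by positivity) hρ.le hK, mul_lt_iff_lt_one_right hρ]

lemma image_add_mul_pow_unitBall (c : ℂ) (hρ : 0 < ρ) (hK : K ≠ 0) :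
    (fun t : ℂ => c + (ρ * t) ^ K) '' ball 0 1 = ball c (ρ ^ K) := by
  have hsurj : Function.Surjective fun t : ℂ => c + (ρ * t) ^ K := fun v => by
    obtain ⟨s, hs⟩ := IsAlgClosed.exists_pow_nat_eq (v - c) (Nat.pos_of_ne_zero hK)
    exact ⟨s / ρ, by simp [mul_div_cancel₀ s (Complex.ofReal_ne_zero.2 hρ.ne'), hs]⟩
  rw [← hsurj.image_preimage (ball c (ρ ^ K))]
  congr! 1
  ext t
  exact (add_mul_pow_mem_ball_iff hρ hK).symm

lemma exists_isCoveringMap_add_mul_pow (c : ℂ) (hρ : 0 < ρ) (hK : K ≠ 0) :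
    ∃ hmaps : Set.MapsTo (fun t : ℂ => c + (ρ * t) ^ K) (ball 0 1 \ {0}) (ball c (ρ ^ K) \ {c}),
      IsCoveringMap hmaps.restrict := by
  have hρ0 : (ρ : ℂ) ≠ 0 := Complex.ofReal_ne_zero.2 hρ.ne'
  refine exists_isCoveringMap_restrict
    ((isCoveringMapOn_add_mul_pow c hρ0 hK).mono fun v hv => hv.2) ?_
  ext t
  simp [-mem_ball, add_mul_pow_mem_ball_iff hρ hK, hK, hρ0]

end PowerCovering

end Puiseux

theorem holomorphic_dependence_of_preimages_general {ι : Type*} [Finite ι] {S U : Set ℂ}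
    (hSopen : IsOpen S) (hUopen : IsOpen U) {F : ℂ × ℂ → ℂ} (hF : DifferentiableOn ℂ F (S ×ˢ U))
    {γ : ℂ → ℂ} (hγ : DifferentiableOn ℂ γ S) {lam0 : ℂ} (hlam0 : lam0 ∈ S) {z : ι → ℂ}
    (hzU : ∀ i, z i ∈ U) (hpre : ∀ i, F (lam0, z i) = γ lam0)
    (hne : ∀ i, ¬ ∀ᶠ v in nhds (z i), F (lam0, v) = γ lam0) :
    ∃ V : Set ℂ, IsOpen V ∧ lam0 ∈ V ∧ V ⊆ S ∧
      ∃ pr : ℂ → ℂ,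
        DifferentiableOn ℂ pr (ball (0 : ℂ) 1) ∧
        pr 0 = lam0 ∧
        pr '' ball (0 : ℂ) 1 = V ∧
        (∃ hmaps : Set.MapsTo pr (ball (0 : ℂ) 1 \ {0}) (V \ {lam0}),
          IsCoveringMap hmaps.restrict) ∧
        ∃ x : ι → ℂ → ℂ,
          (∀ i, DifferentiableOn ℂ (x i) (ball (0 : ℂ) 1)) ∧
          (∀ i, Set.MapsTo (x i) (ball (0 : ℂ) 1) U) ∧
          (∀ i, x i 0 = z i) ∧
          (∀ i, ∀ t ∈ ball (0 : ℂ) 1, F (pr t, x i t) = γ (pr t)) := by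
  obtain ⟨K, hK, ρ, hρ, hprS, x, hx⟩ :=
    Puiseux.exists_preimage_branch_on_unitBall hSopen hUopen hF hγ hlam0 hzU hpre hne
  have himage := Puiseux.image_add_mul_pow_unitBall lam0 hρ hK
  exact ⟨ball lam0 (ρ ^ K), isOpen_ball, mem_ball_self (by positivity), himage ▸ hprS.image_subset,
    fun t => lam0 + (ρ * t) ^ K, by fun_prop, by simp [hK], himage,
    Puiseux.exists_isCoveringMap_add_mul_pow lam0 hρ hK, x, fun i => (hx i).1,
    fun i => (hx i).2.1, fun i => (hx i).2.2.1, fun i => (hx i).2.2.2⟩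

/-- **Holomorphic dependence of preimages.**
Let `S, U ⊆ ℂ` be domains and `F : S × U → ℂ` holomorphic such that `F(λ, ·)` is
nonconstant on `U` for every `λ ∈ S`. Let `γ : S → ℂ` be holomorphic, `λ₀ ∈ S`,
and `z₁, …, z_N` distinct points of `U` with `F(λ₀, z_i) = γ(λ₀)`. Then there is
a neighborhood `V ⊆ S` of `λ₀`, a holomorphic map `π : 𝔻 → V` with `π(0) = λ₀`,
surjective onto `V`, restricting to a covering map `𝔻 ∖ {0} → V ∖ {λ₀}`, and
holomorphic maps `x_i : 𝔻 → U` with `x_i(0) = z_i` and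
`F(π(t), x_i(t)) = γ(π(t))` for all `t ∈ 𝔻`. -/
theorem holomorphic_dependence_of_preimages
    (S U : Set ℂ) (hSopen : IsOpen S) (hSconn : IsConnected S)
    (hUopen : IsOpen U) (hUconn : IsConnected U)
    (F : ℂ × ℂ → ℂ) (hF : DifferentiableOn ℂ F (S ×ˢ U))
    (hnc : ∀ lam ∈ S, ¬ ∃ c : ℂ, ∀ z ∈ U, F (lam, z) = c)
    (γ : ℂ → ℂ) (hγ : DifferentiableOn ℂ γ S)
    (lam0 : ℂ) (hlam0 : lam0 ∈ S)
    (N : ℕ) (hN : 1 ≤ N)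
    (z : Fin N → ℂ) (hzU : ∀ i, z i ∈ U) (hzinj : Function.Injective z)
    (hpre : ∀ i, F (lam0, z i) = γ lam0) :
    ∃ V : Set ℂ, IsOpen V ∧ lam0 ∈ V ∧ V ⊆ S ∧
      ∃ pr : ℂ → ℂ,
        DifferentiableOn ℂ pr (ball (0 : ℂ) 1) ∧
        pr 0 = lam0 ∧
        pr '' ball (0 : ℂ) 1 = V ∧
        (∃ hmaps : Set.MapsTo pr (ball (0 : ℂ) 1 \ {0}) (V \ {lam0}),
          IsCoveringMap hmaps.restrict) ∧
        ∃ x : Fin N → ℂ → ℂ,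
          (∀ i, DifferentiableOn ℂ (x i) (ball (0 : ℂ) 1)) ∧
          (∀ i, Set.MapsTo (x i) (ball (0 : ℂ) 1) U) ∧
          (∀ i, x i 0 = z i) ∧
          (∀ i, ∀ t ∈ ball (0 : ℂ) 1, F (pr t, x i t) = γ (pr t)) :=
  holomorphic_dependence_of_preimages_general hSopen hUopen hF hγ hlam0 hzU hpre fun i =>
    Puiseux.not_eventually_eq_of_not_constant hUopen hUconn.isPreconnected
      (hF.comp (by fun_prop) fun _ hv => ⟨hlam0, hv⟩) (hnc lam0 hlam0) (hzU i)
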